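/- Let F be a k-SAT formula with k≥2 whose factor graph is a tree, μ the uniform distribution over its solutions, {h_{i→a},u_{a→i}} the unique BP fixed point with marginals ν_i, and U⊆V. Let {ĥ_{j→a},û_{a→l}}⊆[0,1] be the unique solution of ĥ_{j→a}=1 if j∈U, ĥ_{j→a}=1−∏_{b∈∂₋j(a)}(1−û_{b→j}) if j∉U, and û_{a→l}=∏_{j∈∂a∖{l}} ((1−tanh h_{j→a})/2)·ĥ_{j→a}. Let x* be a random solution drawn from μ. Then for every i∈V∖U, the probability that i is directly implied by the restriction x*_U equals ν_i(0)·(1−∏_{a∈∂₊i}(1−û_{a→i})) + ν_i(1)·(1−∏_{a∈∂₋i}(1−û_{a→i})). -/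

import Mathlib

open scoped Classical

/-- A k-SAT formula over variables `V` with clause set `A`:
`scope a` is the set `∂a` of variables of clause `a`, and `z a i` is the
value of variable `i` that does NOT satisfy clause `a`. -/
structure KSAT (V A : Type) where
  scope : A → Finset V
  z : A → V → Bool

namespace KSAT

variable {V A : Type}

/-- An assignment satisfies clause `a` iff some variable of `∂a` differs from
its unsatisfying value. -/
def Satisfies (Φ : KSAT V A) (x : V → Bool) (a : A) : Prop :=
  ∃ i ∈ Φ.scope a, x i ≠ Φ.z a i

/-- A solution satisfies every clause. -/
def IsSolution (Φ : KSAT V A) (x : V → Bool) : Prop :=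
  ∀ a : A, Φ.Satisfies x a

/-- The finite set of solutions of the formula. -/
noncomputable def solutions [Fintype V] [DecidableEq V] (Φ : KSAT V A) :
    Finset (V → Bool) :=
  Finset.univ.filter fun x => Φ.IsSolution x

end KSAT

namespace KSAT

variable {V A : Type}

/-- `∂i`: clauses containing variable `i`. -/
noncomputable def nbr [Fintype A] (Φ : KSAT V A) (i : V) : Finset A :=
  Finset.univ.filter fun a => i ∈ Φ.scope a

/-- `∂₊i`: clauses in `∂i` with `z(i,a) = 1`. -/
noncomputable def nbrPos [Fintype A] (Φ : KSAT V A) (i : V) : Finset A :=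
  (Φ.nbr i).filter fun a => Φ.z a i = true

/-- `∂₋i`: clauses in `∂i` with `z(i,a) = 0`. -/
noncomputable def nbrNeg [Fintype A] (Φ : KSAT V A) (i : V) : Finset A :=
  (Φ.nbr i).filter fun a => Φ.z a i = false

/-- `∂₋i(a)`: clauses `b ∈ ∂i ∖ {a}` disagreeing with `a` on the satisfying
value of `x_i`. -/
noncomputable def disag [Fintype A] [DecidableEq A] (Φ : KSAT V A) (i : V) (a : A) : Finset A :=
  ((Φ.nbr i).erase a).filter fun b => Φ.z b i = !Φ.z a i

/-- `∂₊i(a)`: clauses `b ∈ ∂i ∖ {a}` agreeing with `a` on the satisfying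
value of `x_i`. -/
noncomputable def agree [Fintype A] [DecidableEq A] (Φ : KSAT V A) (i : V) (a : A) : Finset A :=
  ((Φ.nbr i).erase a).filter fun b => Φ.z b i = Φ.z a i

/-- The factor graph of a formula: the bipartite graph on `V ⊕ A` with an edge
between variable `i` and clause `a` iff `i ∈ ∂a`. -/
def factorGraph (Φ : KSAT V A) : SimpleGraph (V ⊕ A) :=
  SimpleGraph.fromRel fun x y =>
    match x, y with
    | Sum.inl i, Sum.inr a => i ∈ Φ.scope a
    | _, _ => False

/-- The BP clause-to-variable update
`f((h_{j→a})_{j ∈ ∂a∖i}) = -(1/2)·log(1 - 2^{-(k-1)}·∏ (1 - tanh h_{j→a}))`. -/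
noncomputable def bpUval [DecidableEq V] (Φ : KSAT V A) (k : ℕ)
    (h : V → A → ℝ) (a : A) (i : V) : ℝ :=
  -(1 / 2) * Real.log
    (1 - (∏ j ∈ (Φ.scope a).erase i, (1 - Real.tanh (h j a))) / 2 ^ (k - 1))

/-- A BP fixed point: the BP update equations hold on every directed edge of
the factor graph. -/
def IsBPFixedPoint [Fintype A] [DecidableEq V] [DecidableEq A] (Φ : KSAT V A)
    (k : ℕ) (h : V → A → ℝ) (u : A → V → ℝ) : Prop :=
  ∀ a : A, ∀ i ∈ Φ.scope a,
    h i a = (∑ b ∈ Φ.agree i a, u b i) - (∑ b ∈ Φ.disag i a, u b i) ∧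
    u a i = Φ.bpUval k h a i

/-- The local field `h_i = Σ_{a ∈ ∂₊i} u_{a→i} - Σ_{a ∈ ∂₋i} u_{a→i}`. -/
noncomputable def field [Fintype A] (Φ : KSAT V A) (u : A → V → ℝ) (i : V) : ℝ :=
  (∑ a ∈ Φ.nbrPos i, u a i) - ∑ a ∈ Φ.nbrNeg i, u a i

/-- The BP marginal `ν_i(v)`; the value `0` is encoded by `false` and `1` by
`true`, so `ν_i(0) = (1 + tanh h_i)/2` and `ν_i(1) = (1 - tanh h_i)/2`. -/
noncomputable def bpMarginal [Fintype A] (Φ : KSAT V A) (u : A → V → ℝ)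
    (i : V) (v : Bool) : ℝ :=
  if v then (1 - Real.tanh (Φ.field u i)) / 2 else (1 + Real.tanh (Φ.field u i)) / 2

end KSAT

namespace KSAT

/-- The system of equations for the `hat` messages `(ĥ, û)` of the tree
analysis:  `ĥ_{j→a} = 1` if `j ∈ U`, `ĥ_{j→a} = 1 - ∏_{b ∈ ∂₋j(a)} (1 - û_{b→j})`
otherwise, and `û_{a→l} = ∏_{j ∈ ∂a∖l} ((1 - tanh h_{j→a})/2)·ĥ_{j→a}`,
where `h` is the BP fixed point. -/
def IsHatSolution [Fintype A] [DecidableEq V] [DecidableEq A] (Φ : KSAT V A)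
    (U : Finset V) (h : V → A → ℝ) (hh : V → A → ℝ) (hu : A → V → ℝ) : Prop :=
  ∀ a : A, ∀ j ∈ Φ.scope a,
    (hh j a = if j ∈ U then 1 else 1 - ∏ b ∈ Φ.disag j a, (1 - hu b j)) ∧
    (hu a j = ∏ l ∈ (Φ.scope a).erase j, ((1 - Real.tanh (h l a)) / 2 * hh l a))

end KSAT

namespace KSAT

/-- The derivation closure of the partial assignment `(U, xs)` under
unit-clause propagation: `Derived Φ U xs i v` means the pair `(i, v)` belongs
to the smallest set of (variable, value) pairs containing `(i, xs i)` for
every `i ∈ U` and closed under unit-clause propagation. -/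
inductive Derived [DecidableEq V] (Φ : KSAT V A) (U : Finset V) (xs : V → Bool) :
    V → Bool → Prop
  | fixed (i : V) (hi : i ∈ U) : Derived Φ U xs i (xs i)
  | ucp (a : A) (i : V) (hia : i ∈ Φ.scope a)
      (hrest : ∀ j ∈ (Φ.scope a).erase i, Derived Φ U xs j (Φ.z a j)) :
      Derived Φ U xs i (!Φ.z a i)

end KSAT

/-!
Call the clauses and variables on the far side of `b` from `j` the branch of `b`. Under the uniform
distribution on all assignments, once `x j = v` is prescribed, the branches of the clauses `b`
containing `j` involve disjoint sets of variables and hence are independent. This survives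
conditioning on all clauses being satisfied.

If `v` does not satisfy `b`, then some other variable of `b` must do so. As the other variables of
`b` start disjoint branches too, the probability of this is a product, which yields the recursion
of belief propagation: `(1 - tanh (h l b)) / 2` is the probability that `l` fails `b` in the part
of the formula below `l`.

Propagation can derive the value `v` for `j` only through a clause that is satisfied by `v`. Such a
clause puts no constraint on its branch, so, given `x j = v`, it becomes a unit clause for `j` with
probability `hu b j`, the product over its other variables of the probabilities that they are
derived to fail it, independently of the other clauses at `j`. As a solution agrees with every
derived value, `x i = v` has to be combined only with the derivation of `v` itself, and summing over
`v` gives the formula.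
-/

/-- The vertices on the side of `p` when the edge `pq` of a tree is cut, described by distances so
that no subgraph has to be formed. -/
def halfTree {X : Type*} (G : SimpleGraph X) (p q : X) : Set X :=
  {w | G.dist w p < G.dist w q}

namespace halfTree

variable {X : Type*} {G : SimpleGraph X} {p q r s w w' : X}

lemma mem_def : w ∈ halfTree G p q ↔ G.dist w p < G.dist w q :=
  Iff.rfl

lemma self_mem (hG : G.Connected) (hpq : G.Adj p q) : p ∈ halfTree G p q := by
  simpa [mem_def] using hG.pos_dist_of_ne hpq.ne

lemma right_notMem : q ∉ halfTree G p q := by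
  simp [mem_def]

lemma exists_adj_mem (hG : G.Connected) (hwp : w ≠ p) :
    ∃ r, G.Adj r p ∧ w ∈ halfTree G r p := by
  obtain ⟨walk, hwalk⟩ := hG.exists_walk_length_eq_dist w p
  have hnil : ¬walk.Nil := SimpleGraph.Walk.not_nil_of_ne hwp
  refine ⟨walk.penultimate, walk.adj_penultimate hnil, ?_⟩
  have hlength := congrArg SimpleGraph.Walk.length
    (walk.concat_dropLast (walk.adj_penultimate hnil))
  rw [SimpleGraph.Walk.length_concat] at hlength
  have hdist := SimpleGraph.dist_le walk.dropLast
  rw [mem_def]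
  omega

lemma exists_path_penultimate_eq (hG : G.Connected) (hrp : G.Adj r p) (hw : w ∈ halfTree G r p) :
    ∃ path : G.Walk w p, path.IsPath ∧ path.penultimate = r := by
  obtain ⟨walk, hwalk⟩ := hG.exists_walk_length_eq_dist w r
  have hlength : (walk.concat hrp).length = G.dist w p := by
    have hle := SimpleGraph.dist_le (walk.concat hrp)
    rw [SimpleGraph.Walk.length_concat] at hle ⊢
    rw [mem_def] at hw
    omega
  exact ⟨_, SimpleGraph.Walk.isPath_of_length_eq_dist _ hlength,
    SimpleGraph.Walk.penultimate_concat walk hrp⟩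

lemma eq_of_mem (hG : G.IsTree) (hrp : G.Adj r p) (hsp : G.Adj s p)
    (hr : w ∈ halfTree G r p) (hs : w ∈ halfTree G s p) : r = s := by
  obtain ⟨pathr, hpathr, rfl⟩ := exists_path_penultimate_eq hG.connected hrp hr
  obtain ⟨paths, hpaths, rfl⟩ := exists_path_penultimate_eq hG.connected hsp hs
  rw [(hG.existsUnique_path w p).unique hpathr hpaths]

lemma disjoint (hG : G.IsTree) (hrp : G.Adj r p) (hsp : G.Adj s p) (hrs : r ≠ s) :
    Disjoint (halfTree G r p) (halfTree G s p) :=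
  Set.disjoint_left.2 fun _ hr hs => hrs (eq_of_mem hG hrp hsp hr hs)

lemma mem_swap_of_notMem (hG : G.IsTree) (hpq : G.Adj p q) (hw : w ∉ halfTree G p q) :
    w ∈ halfTree G q p :=
  lt_of_le_of_ne (not_lt.1 hw) (hG.dist_ne_of_adj w hpq).symm

lemma subset (hG : G.IsTree) (hpq : G.Adj p q) (hrp : G.Adj r p) (hrq : r ≠ q) :
    halfTree G r p ⊆ halfTree G p q := fun _ hwr =>
  by_contra fun hw => hrq (eq_of_mem hG hrp hpq.symm hwr (mem_swap_of_notMem hG hpq hw))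

lemma mem_iff (hG : G.IsTree) (hpq : G.Adj p q) :
    w ∈ halfTree G p q ↔ w = p ∨ ∃ r, G.Adj r p ∧ r ≠ q ∧ w ∈ halfTree G r p := by
  constructor
  · intro hw
    by_cases hwp : w = p
    · exact Or.inl hwp
    obtain ⟨r, hrp, hwr⟩ := exists_adj_mem hG.connected hwp
    refine Or.inr ⟨r, hrp, ?_, hwr⟩
    rintro rfl
    exact lt_asymm (mem_def.1 hw) (mem_def.1 hwr)
  · rintro (rfl | ⟨r, hrp, hrq, hwr⟩)
    · exact self_mem hG.connected hpq
    · exact subset hG hpq hrp hrq hwr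

lemma mem_or_eq_of_adj (hG : G.IsTree) (hpq : G.Adj p q) (hw : w ∈ halfTree G p q)
    (hww' : G.Adj w w') : w' ∈ halfTree G p q ∨ w' = q := by
  by_contra! ⟨hw', hne⟩
  replace hw' := mem_swap_of_notMem hG hpq hw'
  obtain ⟨r, hrw', hqr⟩ := exists_adj_mem hG.connected hne.symm
  have hwpq := hG.dist_eq_dist_add_one_of_adj w hpq
  have hw'pq := hG.dist_eq_dist_add_one_of_adj w' hpq
  have hrpq := hG.dist_eq_dist_add_one_of_adj r hpq
  have hpww' := hG.dist_eq_dist_add_one_of_adj p hww'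
  have hqww' := hG.dist_eq_dist_add_one_of_adj q hww'
  simp only [mem_def, G.dist_comm (v := p), G.dist_comm (v := q)]
    at hw hw' hqr hwpq hw'pq hrpq hpww' hqww'
  -- The path from `w'` to `p` begins with `w`; passing through `q`, it also begins with `r`.
  have hpw : p ∈ halfTree G w w' := by rw [mem_def]; omega
  have hpr : p ∈ halfTree G r w' := by rw [mem_def]; omega
  obtain rfl := eq_of_mem hG hrw' hww' hpr hpw
  omega

lemma ncard_lt [Finite X] (hG : G.IsTree) (hpq : G.Adj p q) (hrp : G.Adj r p) (hrq : r ≠ q) :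
    (halfTree G r p).ncard < (halfTree G p q).ncard :=
  Set.ncard_lt_ncard (Set.ssubset_iff_of_subset (subset hG hpq hrp hrq) |>.2
    ⟨p, self_mem hG.connected hpq, right_notMem⟩)

end halfTree

/-- The probability of the event `E` under the uniform distribution on `Ω`. -/
noncomputable def prob {Ω : Type*} [Fintype Ω] (E : Ω → Prop) : ℝ :=
  (Finset.univ.filter E).card / Fintype.card Ω

/-- The conditional probability of `E` given `F` under the uniform distribution, with the junk
value `0` when `F` is empty. -/
noncomputable def condProb {Ω : Type*} [Fintype Ω] (E F : Ω → Prop) : ℝ :=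
  prob (fun ω => E ω ∧ F ω) / prob F

section Probability

variable {Ω : Type*} [Fintype Ω] {E F : Ω → Prop}

lemma prob_eq_card_filter (E : Ω → Prop) [DecidablePred E] :
    prob E = (Finset.univ.filter E).card / Fintype.card Ω := by
  unfold prob
  congr!

lemma prob_true [Nonempty Ω] : prob (fun _ : Ω => True) = 1 := by
  simp [prob]

lemma prob_pos (hE : ∃ ω, E ω) : 0 < prob E := by
  obtain ⟨ω, hω⟩ := hE
  have : Nonempty Ω := ⟨ω⟩
  have hcard : 0 < (Finset.univ.filter E).card := Finset.card_pos.2 ⟨ω, by simpa using hω⟩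
  unfold prob
  positivity

lemma prob_and_not : prob (fun ω => F ω ∧ ¬E ω) = prob F - prob (fun ω => E ω ∧ F ω) := by
  have hcard := Finset.card_filter_add_card_filter_not (s := Finset.univ.filter F) E
  simp only [Finset.filter_filter, and_comm (a := F _) (b := E _)] at hcard
  simp only [prob_eq_card_filter]
  rw [eq_sub_iff_add_eq', ← add_div, ← hcard]
  push_cast
  rfl

lemma prob_eq_sum {β : Type*} [Fintype β] (f : Ω → β) (E : Ω → Prop) :
    prob E = ∑ b, prob (fun ω => f ω = b ∧ E ω) := by
  have hcard := Finset.card_eq_sum_card_fiberwise (s := Finset.univ.filter E)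
    (t := Finset.univ) (f := f) fun _ _ => Finset.mem_coe.2 (Finset.mem_univ _)
  simp only [Finset.filter_filter, and_comm (a := E _)] at hcard
  simp only [prob_eq_card_filter, ← Finset.sum_div]
  rw [hcard]
  push_cast
  rfl

lemma condProb_eq_sum {β : Type*} [Fintype β] (f : Ω → β) (E F : Ω → Prop) :
    condProb E F = ∑ b, condProb (fun ω => f ω = b ∧ E ω) F := by
  simp only [condProb, prob_eq_sum f fun ω => E ω ∧ F ω, Finset.sum_div, and_assoc]

lemma condProb_mul_prob : condProb E F * prob F = prob (fun ω => E ω ∧ F ω) := by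
  by_cases hF : ∃ ω, F ω
  · exact div_mul_cancel₀ _ (prob_pos hF).ne'
  · simp only [not_exists] at hF
    simp [prob, hF]

lemma prob_and_not_eq_mul : prob (fun ω => F ω ∧ ¬E ω) = prob F * (1 - condProb E F) := by
  rw [prob_and_not, ← condProb_mul_prob]
  ring

lemma condProb_congr_left {E' : Ω → Prop} (h : ∀ ω, F ω → (E ω ↔ E' ω)) :
    condProb E F = condProb E' F := by
  rw [condProb, condProb, funext fun ω => propext (and_congr_left (h ω))]

end Probability

section Independence

variable {ι : Type*} {α : ι → Type*}

lemma dependsOn_and {E F : (∀ i, α i) → Prop} {S : Set ι} (hE : DependsOn E S)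
    (hF : DependsOn F S) : DependsOn (fun x => E x ∧ F x) S := fun _ _ hxy =>
  congrArg₂ And (hE hxy) (hF hxy)

lemma dependsOn_forall_mem {κ : Type*} {s : Finset κ} {E : κ → (∀ i, α i) → Prop}
    {S : κ → Set ι} (hE : ∀ b ∈ s, DependsOn (E b) (S b)) :
    DependsOn (fun x => ∀ b ∈ s, E b x) (⋃ b ∈ s, S b) := fun x y hxy => by
  refine propext (forall₂_congr fun b hb => iff_of_eq (hE b hb fun i hi => hxy i ?_))
  exact Set.mem_biUnion hb hi

lemma dependsOn_eval {i : ι} {S : Set ι} (hi : i ∈ S) (v : α i) :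
    DependsOn (fun x : ∀ i, α i => x i = v) S := fun _ _ hxy =>
  congrArg (· = v) (hxy i hi)

lemma apply_update_of_dependsOn [DecidableEq ι] {E : (∀ i, α i) → Prop} {S : Set ι} {j : ι}
    (hE : DependsOn E S) (hj : j ∉ S) (x : ∀ i, α i) (v : α j) :
    E (Function.update x j v) = E x :=
  hE fun _ hi => Function.update_of_ne (ne_of_mem_of_not_mem hi hj) _ _

lemma dependsOn_update_of_insert [DecidableEq ι] {E : (∀ i, α i) → Prop} {S : Set ι} {j : ι}
    (hE : DependsOn E (insert j S)) (v : α j) :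
    DependsOn (fun x => E (Function.update x j v)) S := fun x y hxy => by
  refine hE fun i hi => ?_
  by_cases hij : i = j
  · subst hij; simp
  · simpa [hij] using hxy i (hi.resolve_left hij)

variable [Fintype ι] [DecidableEq ι] [∀ i, Fintype (α i)]

lemma prob_and_of_dependsOn_disjoint {E F : (∀ i, α i) → Prop} {S T : Set ι}
    (hE : DependsOn E S) (hF : DependsOn F T) (hST : Disjoint S T) :
    prob (fun x => E x ∧ F x) = prob E * prob F := by
  -- Exchanging the coordinates in `S` turns a pair `(x, y)` with `E x ∧ F x` into one with
  -- `E y ∧ F x`, and conversely.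
  let exchange : (∀ i, α i) × (∀ i, α i) → (∀ i, α i) × (∀ i, α i) := fun p =>
    (S.piecewise p.2 p.1, S.piecewise p.1 p.2)
  have hinv : Function.Involutive exchange := fun p => by
    ext i <;> by_cases hi : i ∈ S <;> simp [exchange, hi]
  have hE' : ∀ p, E (exchange p).2 ↔ E p.1 := fun p =>
    iff_of_eq (hE fun i hi => by simp [exchange, hi])
  have hF' : ∀ p, F (exchange p).1 ↔ F p.1 := fun p =>
    iff_of_eq (hF fun i hi => by simp [exchange, Set.disjoint_right.1 hST hi])
  have hcard : (Finset.univ.filter fun x => E x ∧ F x).card * Fintype.card (∀ i, α i) =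
      (Finset.univ.filter F).card * (Finset.univ.filter E).card := by
    rw [← Finset.card_univ, ← Finset.card_product, ← Finset.card_product]
    refine Finset.card_equiv hinv.toPerm fun p => ?_
    simp [hE', hF', and_comm]
  obtain hzero | hpos := (Fintype.card (∀ i, α i)).eq_zero_or_pos
  · simp [prob, hzero]
  · simp only [prob_eq_card_filter]
    rw [div_mul_div_comm, div_eq_div_iff (by positivity) (by positivity)]
    have hcard' := congrArg (fun n : ℕ => (n : ℝ) * Fintype.card (∀ i, α i)) hcard
    push_cast at hcard'
    linear_combination hcard'

variable [∀ i, Nonempty (α i)] {κ : Type*} {s : Finset κ} {E F : κ → (∀ i, α i) → Prop}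
  {S : κ → Set ι}

lemma prob_forall_mem (hE : ∀ b ∈ s, DependsOn (E b) (S b))
    (hS : (s : Set κ).PairwiseDisjoint S) :
    prob (fun x => ∀ b ∈ s, E b x) = ∏ b ∈ s, prob (E b) := by
  induction s using Finset.induction_on with
  | empty => simpa using prob_true
  | insert a s ha ih =>
    rw [Finset.forall_mem_insert] at hE
    simp only [Finset.forall_mem_insert, Finset.prod_insert ha]
    rw [← ih hE.2 (hS.subset (by simp))]
    refine prob_and_of_dependsOn_disjoint hE.1 (dependsOn_forall_mem hE.2) ?_
    simp only [Set.disjoint_iUnion_right]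
    exact fun b hb => hS (by simp) (by simp [hb]) (ne_of_mem_of_not_mem hb ha).symm

lemma condProb_forall_mem (hE : ∀ b ∈ s, DependsOn (E b) (S b))
    (hF : ∀ b ∈ s, DependsOn (F b) (S b)) (hS : (s : Set κ).PairwiseDisjoint S) :
    condProb (fun x => ∀ b ∈ s, E b x) (fun x => ∀ b ∈ s, F b x) =
      ∏ b ∈ s, condProb (E b) (F b) := by
  simp only [condProb, Finset.prod_div_distrib, ← forall₂_and]
  rw [prob_forall_mem (fun b hb => dependsOn_and (hE b hb) (hF b hb)) hS, prob_forall_mem hF hS]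

lemma prob_apply_eq (j : ι) (v : α j) : prob (fun x : ∀ i, α i => x j = v) =
    1 / Fintype.card (α j) := by
  have hcard := Fintype.card_filter_piFinset_eq_of_mem (fun i => (Finset.univ : Finset (α i))) j
    (Finset.mem_univ v)
  simp only [Fintype.piFinset_univ, Finset.card_univ] at hcard
  rw [prob_eq_card_filter, hcard, Fintype.card_pi, ← Finset.mul_prod_erase _ _ (Finset.mem_univ j)]
  have hpos : ∏ i ∈ Finset.univ.erase j, (Fintype.card (α i) : ℝ) ≠ 0 :=
    Finset.prod_ne_zero_iff.2 fun i _ => by positivity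
  push_cast
  field_simp

lemma prob_apply_eq_and_forall_mem {j : ι}
    (hE : ∀ b ∈ s, DependsOn (E b) (insert j (S b))) (hj : ∀ b ∈ s, j ∉ S b)
    (hS : (s : Set κ).PairwiseDisjoint S) (v : α j) :
    prob (fun x => x j = v ∧ ∀ b ∈ s, E b x) =
      prob (fun x : ∀ i, α i => x j = v) * ∏ b ∈ s, prob fun x => E b (Function.update x j v) := by
  have hE' : ∀ b ∈ s, DependsOn (fun x => E b (Function.update x j v)) (S b) := fun b hb =>
    dependsOn_update_of_insert (hE b hb) v
  have hpin : (fun x : ∀ i, α i => x j = v ∧ ∀ b ∈ s, E b x) =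
      fun x => x j = v ∧ ∀ b ∈ s, E b (Function.update x j v) := by
    funext x
    refine propext (and_congr_right ?_)
    rintro rfl
    rw [Function.update_eq_self]
  rw [hpin, ← prob_forall_mem hE' hS]
  refine prob_and_of_dependsOn_disjoint (dependsOn_eval (Set.mem_singleton j) v)
    (dependsOn_forall_mem hE') ?_
  simpa using hj

end Independence

section Tanh

lemma one_sub_tanh_div_two_eq (s t : ℝ) : (1 - Real.tanh (s - t)) / 2 =
    Real.exp (-2 * s) / (Real.exp (-2 * s) + Real.exp (-2 * t)) := by
  have hs : Real.exp (-2 * s) = Real.exp (-(s + t)) * Real.exp (-(s - t)) := by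
    rw [← Real.exp_add]; ring_nf
  have ht : Real.exp (-2 * t) = Real.exp (-(s + t)) * Real.exp (s - t) := by
    rw [← Real.exp_add]; ring_nf
  rw [hs, ht, Real.tanh_eq_sinh_div_cosh, Real.sinh_eq, Real.cosh_eq]
  field_simp
  ring

lemma one_sub_tanh_div_two_mem_Ioo (s : ℝ) : (1 - Real.tanh s) / 2 ∈ Set.Ioo (0 : ℝ) 1 :=
  ⟨by linarith [Real.tanh_lt_one s], by linarith [Real.neg_one_lt_tanh s]⟩

end Tanh

namespace KSAT

variable {V A : Type} {Φ : KSAT V A}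

section Branches

variable {p q r s : V ⊕ A} {x : V → Bool} {j l : V} {a b : A}

/-- All clauses on the side of `p` of the factor-graph edge `pq` are satisfied by `x`. -/
def BranchSat (Φ : KSAT V A) (p q : V ⊕ A) (x : V → Bool) : Prop :=
  ∀ c, Sum.inr c ∈ halfTree Φ.factorGraph p q → Φ.Satisfies x c

/-- The variables on the side of `p` of the factor-graph edge `pq`. -/
def branchVars (Φ : KSAT V A) (p q : V ⊕ A) : Set V :=
  Sum.inl ⁻¹' halfTree Φ.factorGraph p q

/-- The clauses below `b` are satisfied by `x`, when the factor graph hangs from the edge between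
`b` and `j`; the clause `b` itself may fail. -/
def ChildrenSat [DecidableEq V] (Φ : KSAT V A) (b : A) (j : V) (x : V → Bool) : Prop :=
  ∀ l ∈ (Φ.scope b).erase j, Φ.BranchSat (.inl l) (.inr b) x

@[simp]
lemma factorGraph_adj_inr_inl : Φ.factorGraph.Adj (.inr b) (.inl j) ↔ j ∈ Φ.scope b := by
  simp [factorGraph]

@[simp]
lemma factorGraph_adj_inl_inr : Φ.factorGraph.Adj (.inl j) (.inr b) ↔ j ∈ Φ.scope b := by
  simp [factorGraph]

@[simp]
lemma not_factorGraph_adj_inl_inl : ¬Φ.factorGraph.Adj (.inl j) (.inl l) := by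
  simp [factorGraph]

@[simp]
lemma not_factorGraph_adj_inr_inr : ¬Φ.factorGraph.Adj (.inr a) (.inr b) := by
  simp [factorGraph]

@[simp]
lemma mem_nbr [Fintype A] : a ∈ Φ.nbr j ↔ j ∈ Φ.scope a := by
  simp [nbr]

lemma mem_disag [Fintype A] [DecidableEq A] :
    b ∈ Φ.disag j a ↔ b ∈ (Φ.nbr j).erase a ∧ Φ.z b j = !Φ.z a j :=
  Finset.mem_filter

lemma branchSat_iff (hG : Φ.factorGraph.IsTree) (hpq : Φ.factorGraph.Adj p q) :
    Φ.BranchSat p q x ↔ (∀ c, .inr c = p → Φ.Satisfies x c) ∧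
      ∀ r, Φ.factorGraph.Adj r p → r ≠ q → Φ.BranchSat r p x := by
  simp only [BranchSat, halfTree.mem_iff hG hpq]
  grind

lemma branchSat_clause_iff [DecidableEq V] (hG : Φ.factorGraph.IsTree) (hj : j ∈ Φ.scope b) :
    Φ.BranchSat (.inr b) (.inl j) x ↔ Φ.Satisfies x b ∧ Φ.ChildrenSat b j x := by
  rw [branchSat_iff hG (factorGraph_adj_inr_inl.2 hj)]
  simp [ChildrenSat, and_imp, imp.swap]

lemma branchSat_var_eq [Fintype A] [DecidableEq A] (hG : Φ.factorGraph.IsTree)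
    (hj : j ∈ Φ.scope a) :
    Φ.BranchSat (.inl j) (.inr a) =
      fun x => ∀ b ∈ (Φ.nbr j).erase a, Φ.BranchSat (.inr b) (.inl j) x := by
  funext x
  rw [eq_iff_iff, branchSat_iff hG (factorGraph_adj_inl_inr.2 hj)]
  simp [and_imp, imp.swap]

lemma isSolution_eq_forall_branchSat [Fintype A] (hG : Φ.factorGraph.IsTree) (i : V) :
    Φ.IsSolution = fun x => ∀ b ∈ Φ.nbr i, Φ.BranchSat (.inr b) (.inl i) x := by
  refine funext fun x => propext ⟨fun hx b _ c _ => hx c, fun hx c => ?_⟩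
  obtain ⟨l | b, hadj, hc⟩ := halfTree.exists_adj_mem hG.connected (w := .inr c) (p := .inl i)
    Sum.inr_ne_inl
  · exact absurd hadj not_factorGraph_adj_inl_inl
  · exact hx b (mem_nbr.2 (factorGraph_adj_inr_inl.1 hadj)) c hc

lemma dependsOn_satisfies (b : A) : DependsOn (Φ.Satisfies · b) (Φ.scope b) := fun x y hxy =>
  propext (exists_congr fun i => and_congr_right fun hi => by rw [hxy i hi])

lemma dependsOn_branchSat (hG : Φ.factorGraph.IsTree) (hpq : Φ.factorGraph.Adj p q) :
    DependsOn (Φ.BranchSat p q) (Φ.branchVars p q ∪ Sum.inl ⁻¹' {q}) := fun x y hxy => by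
  refine propext (forall₂_congr fun c hc => iff_of_eq (dependsOn_satisfies c fun i hi => hxy i ?_))
  exact halfTree.mem_or_eq_of_adj hG hpq hc (factorGraph_adj_inr_inl.2 hi)

lemma dependsOn_branchSat_var (hG : Φ.factorGraph.IsTree) (hj : j ∈ Φ.scope a) :
    DependsOn (Φ.BranchSat (.inl j) (.inr a)) (Φ.branchVars (.inl j) (.inr a)) :=
  (dependsOn_branchSat hG (factorGraph_adj_inl_inr.2 hj)).mono
    (Set.union_subset subset_rfl fun _ hv => absurd hv Sum.inl_ne_inr)

lemma dependsOn_branchSat_clause (hG : Φ.factorGraph.IsTree) (hj : j ∈ Φ.scope b) :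
    DependsOn (Φ.BranchSat (.inr b) (.inl j)) (insert j (Φ.branchVars (.inr b) (.inl j))) :=
  (dependsOn_branchSat hG (factorGraph_adj_inr_inl.2 hj)).mono fun v hv => by
    simpa [or_comm] using hv

lemma disjoint_branchVars (hG : Φ.factorGraph.IsTree) (hrp : Φ.factorGraph.Adj r p)
    (hsp : Φ.factorGraph.Adj s p) (hrs : r ≠ s) :
    Disjoint (Φ.branchVars r p) (Φ.branchVars s p) :=
  (halfTree.disjoint hG hrp hsp hrs).preimage _

lemma branchVars_subset (hG : Φ.factorGraph.IsTree) (hpq : Φ.factorGraph.Adj p q)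
    (hrp : Φ.factorGraph.Adj r p) (hrq : r ≠ q) : Φ.branchVars r p ⊆ Φ.branchVars p q :=
  Set.preimage_mono (halfTree.subset hG hpq hrp hrq)

lemma pairwiseDisjoint_branchVars_var (hG : Φ.factorGraph.IsTree) {t : Finset V}
    (ht : t ⊆ Φ.scope b) :
    (t : Set V).PairwiseDisjoint fun l => Φ.branchVars (.inl l) (.inr b) :=
  fun _ hl _ hl' hne => disjoint_branchVars hG (factorGraph_adj_inl_inr.2 (ht hl))
    (factorGraph_adj_inl_inr.2 (ht hl')) (Sum.inl_injective.ne hne)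

lemma pairwiseDisjoint_branchVars_clause [Fintype A] (hG : Φ.factorGraph.IsTree) {B : Finset A}
    (hB : B ⊆ Φ.nbr j) :
    (B : Set A).PairwiseDisjoint fun b => Φ.branchVars (.inr b) (.inl j) :=
  fun _ hb _ hb' hne => disjoint_branchVars hG (factorGraph_adj_inr_inl.2 (mem_nbr.1 (hB hb)))
    (factorGraph_adj_inr_inl.2 (mem_nbr.1 (hB hb'))) (Sum.inr_injective.ne hne)

lemma notMem_branchVars : j ∉ Φ.branchVars (.inr b) (.inl j) :=
  halfTree.right_notMem

lemma mem_branchVars (hG : Φ.factorGraph.IsTree) (hj : j ∈ Φ.scope a) :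
    j ∈ Φ.branchVars (.inl j) (.inr a) :=
  halfTree.self_mem hG.connected (factorGraph_adj_inl_inr.2 hj)

lemma dependsOn_forall_mem_scope_erase [DecidableEq V] (hG : Φ.factorGraph.IsTree)
    (hj : j ∈ Φ.scope b) {E : V → (V → Bool) → Prop}
    (hE : ∀ l ∈ (Φ.scope b).erase j, DependsOn (E l) (Φ.branchVars (.inl l) (.inr b))) :
    DependsOn (fun x => ∀ l ∈ (Φ.scope b).erase j, E l x) (Φ.branchVars (.inr b) (.inl j)) := by
  refine (dependsOn_forall_mem hE).mono (Set.iUnion₂_subset fun l hl => ?_)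
  obtain ⟨hlj, hlb⟩ := Finset.mem_erase.1 hl
  exact branchVars_subset hG (factorGraph_adj_inr_inl.2 hj) (factorGraph_adj_inl_inr.2 hlb)
    (Sum.inl_injective.ne hlj)

lemma dependsOn_childrenSat [DecidableEq V] (hG : Φ.factorGraph.IsTree) (hj : j ∈ Φ.scope b) :
    DependsOn (Φ.ChildrenSat b j) (Φ.branchVars (.inr b) (.inl j)) :=
  dependsOn_forall_mem_scope_erase hG hj fun _ hl =>
    dependsOn_branchSat_var hG (Finset.mem_of_mem_erase hl)

lemma satisfies_update_iff [DecidableEq V] {v : Bool} (hj : j ∈ Φ.scope b) :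
    Φ.Satisfies (Function.update x j v) b ↔
      (v = Φ.z b j → ¬∀ l ∈ (Φ.scope b).erase j, x l = Φ.z b l) := by
  have hsplit : (∀ l ∈ Φ.scope b, Function.update x j v l = Φ.z b l) ↔
      v = Φ.z b j ∧ ∀ l ∈ (Φ.scope b).erase j, x l = Φ.z b l := by
    rw [← Finset.insert_erase hj, Finset.forall_mem_insert, Function.update_self,
      Finset.insert_erase hj]
    refine and_congr_right fun _ => forall₂_congr fun l hl => ?_
    rw [Function.update_of_ne (Finset.ne_of_mem_erase hl)]
  rw [← not_and, ← hsplit]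
  simp [Satisfies]

lemma branchSat_update_iff [DecidableEq V] {v : Bool} (hG : Φ.factorGraph.IsTree)
    (hj : j ∈ Φ.scope b) :
    Φ.BranchSat (.inr b) (.inl j) (Function.update x j v) ↔ Φ.ChildrenSat b j x ∧
      (v = Φ.z b j → ¬∀ l ∈ (Φ.scope b).erase j, x l = Φ.z b l) := by
  rw [branchSat_clause_iff hG hj, satisfies_update_iff hj, and_comm,
    apply_update_of_dependsOn (dependsOn_childrenSat hG hj) notMem_branchVars]

lemma cavity_induction [Finite V] [Fintype A] [DecidableEq V] [DecidableEq A]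
    (hG : Φ.factorGraph.IsTree) {P : V → A → Prop}
    (step : ∀ j a, j ∈ Φ.scope a →
      (∀ b ∈ (Φ.nbr j).erase a, ∀ l ∈ (Φ.scope b).erase j, P l b) → P j a)
    (hj : j ∈ Φ.scope a) : P j a := by
  induction hn : (halfTree Φ.factorGraph (.inl j) (.inr a)).ncard using Nat.strong_induction_on
    generalizing j a with
  | _ n ih =>
  subst hn
  refine step j a hj fun b hb l hl => ih _ ?_ (Finset.mem_of_mem_erase hl) rfl
  obtain ⟨hba, hjb⟩ := Finset.mem_erase.1 hb
  obtain ⟨hlj, hlb⟩ := Finset.mem_erase.1 hl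
  rw [mem_nbr] at hjb
  calc (halfTree Φ.factorGraph (.inl l) (.inr b)).ncard
      < (halfTree Φ.factorGraph (.inr b) (.inl j)).ncard :=
        halfTree.ncard_lt hG (factorGraph_adj_inr_inl.2 hjb) (factorGraph_adj_inl_inr.2 hlb)
          (Sum.inl_injective.ne hlj)
    _ < (halfTree Φ.factorGraph (.inl j) (.inr a)).ncard :=
        halfTree.ncard_lt hG (factorGraph_adj_inl_inr.2 hj) (factorGraph_adj_inr_inl.2 hjb)
          (Sum.inr_injective.ne hba)

lemma eq_of_derived [DecidableEq V] {U : Finset V} {v : Bool} (hx : Φ.IsSolution x)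
    (hd : Φ.Derived U x j v) : x j = v := by
  induction hd with
  | fixed => rfl
  | ucp a i _ _ ih =>
    obtain ⟨l, hl, hne⟩ := hx a
    obtain rfl : l = i := by_contra fun hli => hne (ih l (Finset.mem_erase.2 ⟨hli, hl⟩))
    exact Bool.eq_not.2 hne

end Branches

section Propagation

variable [Fintype A] [DecidableEq V] [DecidableEq A] {U : Finset V} {x : V → Bool} {i j : V}
  {a b : A} {v : Bool}

/-- Unit-clause propagation from `U`, without using the clause `a`, derives for `j` the value that
does not satisfy `a`, and this is the value of `x`. Requiring the value of `x` here makes the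
event local even for assignments `x` that are not solutions. -/
inductive CavityImplied (Φ : KSAT V A) (U : Finset V) (x : V → Bool) : V → A → Prop
  | fixed {j : V} {a : A} (hj : j ∈ U) (hx : x j = Φ.z a j) : CavityImplied Φ U x j a
  | ucp {j : V} {a b : A} (hb : b ∈ Φ.disag j a) (hx : x j = Φ.z a j)
      (hrest : ∀ l ∈ (Φ.scope b).erase j, CavityImplied Φ U x l b) : CavityImplied Φ U x j a

/-- All variables of the clause `b` other than `j` are derived to fail `b`, so that `b` becomes a
unit clause for `j`. -/
def Forces (Φ : KSAT V A) (U : Finset V) (x : V → Bool) (b : A) (j : V) : Prop :=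
  ∀ l ∈ (Φ.scope b).erase j, Φ.CavityImplied U x l b

lemma cavityImplied_iff : Φ.CavityImplied U x j a ↔
    x j = Φ.z a j ∧ (j ∈ U ∨ ∃ b ∈ Φ.disag j a, Φ.Forces U x b j) := by
  constructor
  · rintro (⟨hj, hx⟩ | ⟨hb, hx, hrest⟩)
    exacts [⟨hx, .inl hj⟩, ⟨hx, .inr ⟨_, hb, hrest⟩⟩]
  · rintro ⟨hx, hj | ⟨b, hb, hrest⟩⟩
    exacts [.fixed hj hx, .ucp hb hx hrest]

lemma dependsOn_cavityImplied [Finite V] (hG : Φ.factorGraph.IsTree) (hj : j ∈ Φ.scope a) :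
    DependsOn (Φ.CavityImplied U · j a) (Φ.branchVars (.inl j) (.inr a)) := by
  refine cavity_induction hG (P := fun j a => DependsOn (Φ.CavityImplied U · j a)
    (Φ.branchVars (.inl j) (.inr a))) (fun j a hj ih => ?_) hj
  intro x y hxy
  have hforces : ∀ b ∈ Φ.disag j a, Φ.Forces U x b j ↔ Φ.Forces U y b j := fun b hb => by
    obtain ⟨hb, -⟩ := mem_disag.1 hb
    obtain ⟨hba, hjb⟩ := Finset.mem_erase.1 hb
    rw [mem_nbr] at hjb
    exact iff_of_eq (dependsOn_forall_mem_scope_erase hG hjb (ih b hb) fun v hv => hxy v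
      (branchVars_subset hG (factorGraph_adj_inl_inr.2 hj) (factorGraph_adj_inr_inl.2 hjb)
        (Sum.inr_injective.ne hba) hv))
  simp only [cavityImplied_iff, hxy j (mem_branchVars hG hj)]
  rw [exists_congr fun b => and_congr_right (hforces b)]

lemma dependsOn_forces [Finite V] (hG : Φ.factorGraph.IsTree) (hj : j ∈ Φ.scope b) :
    DependsOn (Φ.Forces U · b j) (Φ.branchVars (.inr b) (.inl j)) :=
  dependsOn_forall_mem_scope_erase hG hj fun _ hl =>
    dependsOn_cavityImplied hG (Finset.mem_of_mem_erase hl)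

lemma derived_of_cavityImplied (hc : Φ.CavityImplied U x j a) : Φ.Derived U x j (Φ.z a j) := by
  induction hc with
  | fixed hj hx => exact hx ▸ .fixed _ hj
  | @ucp j a b hb _ _ ih =>
    obtain ⟨hb, hz⟩ := mem_disag.1 hb
    rw [← Bool.not_eq_eq_eq_not.2 hz]
    exact .ucp b j (mem_nbr.1 (Finset.mem_of_mem_erase hb)) ih

lemma cavityImplied_of_derived (hx : Φ.IsSolution x) (hd : Φ.Derived U x j v) (hv : v = Φ.z a j) :
    Φ.CavityImplied U x j a := by
  induction hd generalizing a with
  | fixed j hj => exact .fixed hj hv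
  | ucp b j hjb hrest ih =>
    have hba : b ≠ a := by rintro rfl; exact Bool.not_ne_self _ hv
    refine .ucp (mem_disag.2 ⟨by simp [hba, hjb], Bool.not_eq_eq_eq_not.1 hv⟩) ?_
      fun l hl => ih l hl rfl
    exact hv ▸ eq_of_derived hx (.ucp b j hjb hrest)

lemma derived_iff_exists_forces (hx : Φ.IsSolution x) (hi : i ∉ U) :
    Φ.Derived U x i v ↔ ∃ b ∈ (Φ.nbr i).filter (Φ.z · i = !v), Φ.Forces U x b i := by
  constructor
  · rintro (⟨_, hi'⟩ | ⟨b, _, hib, hrest⟩)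
    · exact absurd hi' hi
    · exact ⟨b, by simp [hib], fun l hl => cavityImplied_of_derived hx (hrest l hl) rfl⟩
  · rintro ⟨b, hb, hforces⟩
    obtain ⟨hib, hz⟩ := Finset.mem_filter.1 hb
    rw [← Bool.not_eq_eq_eq_not.2 hz]
    exact .ucp b i (mem_nbr.1 hib) fun l hl => derived_of_cavityImplied (hforces l hl)

end Propagation

section Recursion

variable [Fintype V] [DecidableEq V] {U : Finset V} {j : V} {b : A} {v : Bool}

/-- The conditional probability that `l` does not satisfy `b`, in the formula below `l` when the
factor graph hangs from the edge between `l` and `b`. -/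
noncomputable def unsatProb (Φ : KSAT V A) (l : V) (b : A) : ℝ :=
  condProb (fun x => x l = Φ.z b l) (Φ.BranchSat (.inl l) (.inr b))

/-- The conditional probability that propagation without `b` derives for `l` the value that does
not satisfy `b`, in the formula below `l`. -/
noncomputable def impliedProb [Fintype A] [DecidableEq A] (Φ : KSAT V A) (U : Finset V) (l : V)
    (b : A) : ℝ :=
  condProb (Φ.CavityImplied U · l b) (Φ.BranchSat (.inl l) (.inr b))

lemma condProb_unsat_childrenSat (hG : Φ.factorGraph.IsTree) (j : V) (b : A) :
    condProb (fun x => ∀ l ∈ (Φ.scope b).erase j, x l = Φ.z b l) (Φ.ChildrenSat b j) =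
      ∏ l ∈ (Φ.scope b).erase j, Φ.unsatProb l b :=
  condProb_forall_mem
    (fun _ hl => dependsOn_eval (mem_branchVars hG (Finset.mem_of_mem_erase hl)) _)
    (fun _ hl => dependsOn_branchSat_var hG (Finset.mem_of_mem_erase hl))
    (pairwiseDisjoint_branchVars_var hG (Finset.erase_subset j _))

lemma prob_branchSat_update (hG : Φ.factorGraph.IsTree) (hj : j ∈ Φ.scope b) :
    prob (fun x => Φ.BranchSat (.inr b) (.inl j) (Function.update x j v)) =
      prob (Φ.ChildrenSat b j) *
        if Φ.z b j = v then 1 - ∏ l ∈ (Φ.scope b).erase j, Φ.unsatProb l b else 1 := by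
  simp only [branchSat_update_iff hG hj]
  split_ifs with hv
  · simp only [hv, forall_const, prob_and_not_eq_mul, condProb_unsat_childrenSat hG]
  · simp only [eq_comm (a := v), hv, false_imp_iff, and_true, mul_one]

lemma prob_apply_eq_and_forall_branchSat [Fintype A] {B : Finset A}
    (hG : Φ.factorGraph.IsTree) (hB : B ⊆ Φ.nbr j) :
    prob (fun x => x j = v ∧ ∀ b ∈ B, Φ.BranchSat (.inr b) (.inl j) x) =
      1 / 2 * (∏ b ∈ B, prob (Φ.ChildrenSat b j)) *
        ∏ b ∈ B.filter (Φ.z · j = v), (1 - ∏ l ∈ (Φ.scope b).erase j, Φ.unsatProb l b) := by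
  rw [prob_apply_eq_and_forall_mem
    (fun b hb => dependsOn_branchSat_clause hG (mem_nbr.1 (hB hb)))
    (fun _ _ => notMem_branchVars) (pairwiseDisjoint_branchVars_clause hG hB), prob_apply_eq,
    Finset.prod_congr rfl fun b hb => prob_branchSat_update hG (mem_nbr.1 (hB hb)),
    Finset.prod_mul_distrib, ← Finset.prod_filter, mul_assoc, Fintype.card_bool, Nat.cast_two]

variable [Fintype A] [DecidableEq A]

lemma condProb_forces_childrenSat (hG : Φ.factorGraph.IsTree) (j : V) (b : A) :
    condProb (Φ.Forces U · b j) (Φ.ChildrenSat b j) =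
      ∏ l ∈ (Φ.scope b).erase j, Φ.impliedProb U l b :=
  condProb_forall_mem
    (fun _ hl => dependsOn_cavityImplied hG (Finset.mem_of_mem_erase hl))
    (fun _ hl => dependsOn_branchSat_var hG (Finset.mem_of_mem_erase hl))
    (pairwiseDisjoint_branchVars_var hG (Finset.erase_subset j _))

lemma prob_branchSat_update_and_not_forces (hG : Φ.factorGraph.IsTree) (hj : j ∈ Φ.scope b) :
    prob (fun x => Φ.BranchSat (.inr b) (.inl j) (Function.update x j v) ∧
        (Φ.z b j = (!v) → ¬Φ.Forces U (Function.update x j v) b j)) =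
      prob (fun x => Φ.BranchSat (.inr b) (.inl j) (Function.update x j v)) *
        if Φ.z b j = !v then 1 - ∏ l ∈ (Φ.scope b).erase j, Φ.impliedProb U l b else 1 := by
  split_ifs with hv
  · have hne : Φ.z b j ≠ v := fun h => Bool.not_ne_self v (hv ▸ h)
    rw [prob_branchSat_update hG hj, if_neg hne, mul_one, ← condProb_forces_childrenSat hG,
      ← prob_and_not_eq_mul]
    simp only [branchSat_update_iff hG hj, hne.symm, false_imp_iff, and_true]
    simp only [hv, forall_const,
      apply_update_of_dependsOn (dependsOn_forces hG hj) notMem_branchVars]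
  · simp only [hv, false_imp_iff, and_true, mul_one]

variable {B : Finset A}

lemma prob_apply_eq_and_forall_branchSat_and_not_forces (hG : Φ.factorGraph.IsTree)
    (hB : B ⊆ Φ.nbr j) :
    prob (fun x => (x j = v ∧ ∀ b ∈ B, Φ.BranchSat (.inr b) (.inl j) x) ∧
        ¬∃ b ∈ B.filter (Φ.z · j = !v), Φ.Forces U x b j) =
      prob (fun x => x j = v ∧ ∀ b ∈ B, Φ.BranchSat (.inr b) (.inl j) x) *
        ∏ b ∈ B.filter (Φ.z · j = !v),
          (1 - ∏ l ∈ (Φ.scope b).erase j, Φ.impliedProb U l b) := by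
  have hmerge : (fun x : V → Bool => (x j = v ∧ ∀ b ∈ B, Φ.BranchSat (.inr b) (.inl j) x) ∧
      ¬∃ b ∈ B.filter (Φ.z · j = !v), Φ.Forces U x b j) = fun x => x j = v ∧
      ∀ b ∈ B, Φ.BranchSat (.inr b) (.inl j) x ∧ (Φ.z b j = (!v) → ¬Φ.Forces U x b j) := by
    funext x
    simp [and_assoc, forall_and]
  have hdep : ∀ b ∈ B, DependsOn (Φ.BranchSat (.inr b) (.inl j))
      (insert j (Φ.branchVars (.inr b) (.inl j))) := fun b hb =>
    dependsOn_branchSat_clause hG (mem_nbr.1 (hB hb))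
  have hdep' : ∀ b ∈ B, DependsOn
      (fun x => Φ.BranchSat (.inr b) (.inl j) x ∧ (Φ.z b j = (!v) → ¬Φ.Forces U x b j))
      (insert j (Φ.branchVars (.inr b) (.inl j))) := fun b hb =>
    dependsOn_and (hdep b hb) fun _ _ hxy => congrArg (_ → ¬·)
      (dependsOn_forces hG (mem_nbr.1 (hB hb)) fun i hi => hxy i (Set.mem_insert_of_mem _ hi))
  have hdisj := pairwiseDisjoint_branchVars_clause hG hB
  rw [hmerge, prob_apply_eq_and_forall_mem hdep' (fun _ _ => notMem_branchVars) hdisj,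
    prob_apply_eq_and_forall_mem hdep (fun _ _ => notMem_branchVars) hdisj, mul_assoc,
    Finset.prod_filter, ← Finset.prod_mul_distrib,
    Finset.prod_congr rfl fun b hb =>
      prob_branchSat_update_and_not_forces hG (mem_nbr.1 (hB hb))]

lemma condProb_apply_eq_and_exists_forces (hG : Φ.factorGraph.IsTree) (hB : B ⊆ Φ.nbr j) :
    condProb (fun x => x j = v ∧ ∃ b ∈ B.filter (Φ.z · j = !v), Φ.Forces U x b j)
        (fun x => ∀ b ∈ B, Φ.BranchSat (.inr b) (.inl j) x) =
      condProb (fun x => x j = v) (fun x => ∀ b ∈ B, Φ.BranchSat (.inr b) (.inl j) x) *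
        (1 - ∏ b ∈ B.filter (Φ.z · j = !v),
          (1 - ∏ l ∈ (Φ.scope b).erase j, Φ.impliedProb U l b)) := by
  have hcompl := prob_apply_eq_and_forall_branchSat_and_not_forces (U := U) (v := v) hG hB
  rw [prob_and_not, sub_eq_iff_eq_add, ← sub_eq_iff_eq_add'] at hcompl
  rw [condProb, condProb, div_mul_eq_mul_div, mul_one_sub, hcompl]
  simp only [and_left_comm, and_assoc]

end Recursion

section BeliefPropagation

variable [Fintype A] [DecidableEq V] [DecidableEq A] {U : Finset V} {i j : V} {a b : A} {k : ℕ}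
  {h hh : V → A → ℝ} {u hu : A → V → ℝ}

lemma one_sub_prod_eq_exp (hk2 : 2 ≤ k) (hk : (Φ.scope b).card = k)
    (hbp : Φ.IsBPFixedPoint k h u) (hj : j ∈ Φ.scope b) :
    1 - ∏ l ∈ (Φ.scope b).erase j, (1 - Real.tanh (h l b)) / 2 = Real.exp (-2 * u b j) := by
  have hcard : ((Φ.scope b).erase j).card = k - 1 := by rw [Finset.card_erase_of_mem hj, hk]
  have hne : ((Φ.scope b).erase j).Nonempty := Finset.card_pos.1 (by omega)
  have hlt : ∏ l ∈ (Φ.scope b).erase j, (1 - Real.tanh (h l b)) / 2 < 1 := by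
    have hlt := Finset.prod_lt_prod_of_nonempty
      (fun l _ => (one_sub_tanh_div_two_mem_Ioo (h l b)).1)
      (fun l _ => (one_sub_tanh_div_two_mem_Ioo (h l b)).2) hne
    rwa [Finset.prod_const_one] at hlt
  have hu : u b j = -(1 / 2) *
      Real.log (1 - ∏ l ∈ (Φ.scope b).erase j, (1 - Real.tanh (h l b)) / 2) := by
    rw [(hbp b j hj).2, bpUval, Finset.prod_div_distrib, Finset.prod_const, hcard]
  rw [hu, ← mul_assoc, show (-2 : ℝ) * -(1 / 2) = 1 by norm_num, one_mul,
    Real.exp_log (sub_pos.2 hlt)]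

variable [Fintype V]

lemma condProb_apply_eq_of_unsatProb {B : Finset A} (hk2 : 2 ≤ k) (hk : ∀ a, (Φ.scope a).card = k)
    (hG : Φ.factorGraph.IsTree) (hbp : Φ.IsBPFixedPoint k h u) (hB : B ⊆ Φ.nbr j)
    (hunsat : ∀ b ∈ B, ∀ l ∈ (Φ.scope b).erase j, Φ.unsatProb l b = (1 - Real.tanh (h l b)) / 2)
    (hsat : ∃ x, ∀ b ∈ B, Φ.BranchSat (.inr b) (.inl j) x) (v : Bool) :
    condProb (fun x => x j = v) (fun x => ∀ b ∈ B, Φ.BranchSat (.inr b) (.inl j) x) =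
      (1 - Real.tanh (∑ b ∈ B.filter (Φ.z · j = v), u b j -
        ∑ b ∈ B.filter (Φ.z · j = !v), u b j)) / 2 := by
  set w := 1 / 2 * ∏ b ∈ B, prob (Φ.ChildrenSat b j)
  have hnum : ∀ v, prob (fun x => x j = v ∧ ∀ b ∈ B, Φ.BranchSat (.inr b) (.inl j) x) =
      w * Real.exp (-2 * ∑ b ∈ B.filter (Φ.z · j = v), u b j) := fun v => by
    rw [prob_apply_eq_and_forall_branchSat hG hB, Finset.mul_sum, Real.exp_sum]
    refine congrArg (w * ·) (Finset.prod_congr rfl fun b hb => ?_)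
    obtain ⟨hbB, -⟩ := Finset.mem_filter.1 hb
    rw [Finset.prod_congr rfl (hunsat b hbB),
      one_sub_prod_eq_exp hk2 (hk b) hbp (mem_nbr.1 (hB hbB))]
  have hden : prob (fun x => ∀ b ∈ B, Φ.BranchSat (.inr b) (.inl j) x) =
      w * (Real.exp (-2 * ∑ b ∈ B.filter (Φ.z · j = v), u b j) +
        Real.exp (-2 * ∑ b ∈ B.filter (Φ.z · j = !v), u b j)) := by
    rw [prob_eq_sum (fun x => x j), Fintype.sum_bool, hnum, hnum, ← mul_add]
    cases v <;> simp [add_comm]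
  have hw0 : w ≠ 0 := fun h0 => (prob_pos hsat).ne' (by rw [hden, h0, zero_mul])
  rw [condProb, hnum, hden, mul_div_mul_left _ _ hw0, one_sub_tanh_div_two_eq]

theorem unsatProb_eq (hk2 : 2 ≤ k) (hk : ∀ a, (Φ.scope a).card = k)
    (hG : Φ.factorGraph.IsTree) (hsat : ∃ x, Φ.IsSolution x) (hbp : Φ.IsBPFixedPoint k h u)
    (hj : j ∈ Φ.scope a) : Φ.unsatProb j a = (1 - Real.tanh (h j a)) / 2 := by
  refine cavity_induction hG (P := fun j a => Φ.unsatProb j a = (1 - Real.tanh (h j a)) / 2)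
    (fun j a hj ih => ?_) hj
  obtain ⟨x, hx⟩ := hsat
  rw [unsatProb, branchSat_var_eq hG hj, condProb_apply_eq_of_unsatProb hk2 hk hG hbp
    (Finset.erase_subset a _) ih ⟨x, fun b _ c _ => hx c⟩, (hbp a j hj).1]
  rfl

theorem impliedProb_eq (hk2 : 2 ≤ k) (hk : ∀ a, (Φ.scope a).card = k)
    (hG : Φ.factorGraph.IsTree) (hsat : ∃ x, Φ.IsSolution x) (hbp : Φ.IsBPFixedPoint k h u)
    (hhat : Φ.IsHatSolution U h hh hu) (hj : j ∈ Φ.scope a) :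
    Φ.impliedProb U j a = (1 - Real.tanh (h j a)) / 2 * hh j a := by
  refine cavity_induction hG
    (P := fun j a => Φ.impliedProb U j a = (1 - Real.tanh (h j a)) / 2 * hh j a)
    (fun j a hj ih => ?_) hj
  rw [← unsatProb_eq hk2 hk hG hsat hbp hj, (hhat a j hj).1, impliedProb, unsatProb]
  simp only [cavityImplied_iff]
  split_ifs with hjU
  · simp only [hjU, true_or, and_true, mul_one]
  · simp only [hjU, false_or]
    rw [branchSat_var_eq hG hj]
    refine (condProb_apply_eq_and_exists_forces hG (Finset.erase_subset a _)).trans ?_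
    refine congrArg (fun t => _ * (1 - t)) (Finset.prod_congr rfl fun b hb => ?_)
    obtain ⟨hb, -⟩ := mem_disag.1 hb
    rw [Finset.prod_congr rfl (ih b hb),
      (hhat b j (mem_nbr.1 (Finset.mem_of_mem_erase hb))).2]

theorem condProb_isSolution_eq_bpMarginal (hk2 : 2 ≤ k) (hk : ∀ a, (Φ.scope a).card = k)
    (hG : Φ.factorGraph.IsTree) (hsat : ∃ x, Φ.IsSolution x) (hbp : Φ.IsBPFixedPoint k h u)
    (i : V) (v : Bool) : condProb (fun x => x i = v) Φ.IsSolution = Φ.bpMarginal u i v := by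
  obtain ⟨x, hx⟩ := hsat
  have hunsat : ∀ b ∈ Φ.nbr i, ∀ l ∈ (Φ.scope b).erase i,
      Φ.unsatProb l b = (1 - Real.tanh (h l b)) / 2 := fun b _ l hl =>
    unsatProb_eq hk2 hk hG ⟨x, hx⟩ hbp (Finset.mem_of_mem_erase hl)
  rw [isSolution_eq_forall_branchSat hG i,
    condProb_apply_eq_of_unsatProb hk2 hk hG hbp subset_rfl hunsat ⟨x, fun b _ c _ => hx c⟩ v]
  cases v
  · rw [← neg_sub (Finset.sum _ _), Real.tanh_neg, sub_neg_eq_add]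
    rfl
  · rfl

theorem condProb_apply_eq_and_exists_derived (hk2 : 2 ≤ k) (hk : ∀ a, (Φ.scope a).card = k)
    (hG : Φ.factorGraph.IsTree) (hsat : ∃ x, Φ.IsSolution x) (hbp : Φ.IsBPFixedPoint k h u)
    (hhat : Φ.IsHatSolution U h hh hu) (hi : i ∉ U) (v : Bool) :
    condProb (fun x => x i = v ∧ ∃ v', Φ.Derived U x i v') Φ.IsSolution =
      Φ.bpMarginal u i v * (1 - ∏ b ∈ (Φ.nbr i).filter (Φ.z · i = !v), (1 - hu b i)) := by
  have hforces : ∀ x, Φ.IsSolution x → ((x i = v ∧ ∃ v', Φ.Derived U x i v') ↔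
      x i = v ∧ ∃ b ∈ (Φ.nbr i).filter (Φ.z · i = !v), Φ.Forces U x b i) := fun x hx => by
    rw [← derived_iff_exists_forces hx hi]
    refine and_congr_right fun hxv => ⟨fun ⟨v', hd⟩ => ?_, fun hd => ⟨v, hd⟩⟩
    rwa [← hxv, eq_of_derived hx hd]
  rw [condProb_congr_left hforces, ← condProb_isSolution_eq_bpMarginal hk2 hk hG hsat hbp,
    isSolution_eq_forall_branchSat hG i,
    condProb_apply_eq_and_exists_forces hG subset_rfl]
  refine congrArg (fun t => _ * (1 - t)) (Finset.prod_congr rfl fun b hb => ?_)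
  have hib := mem_nbr.1 (Finset.mem_filter.1 hb).1
  rw [(hhat b i hib).2, Finset.prod_congr rfl fun l hl =>
    impliedProb_eq hk2 hk hG hsat hbp hhat (Finset.mem_of_mem_erase hl)]

end BeliefPropagation

end KSAT

/-- on a tree factor graph, for a uniformly random solution `x*`
and a variable `i ∉ U`, the probability that `i` is directly implied by the
restriction of `x*` to `U` equals
`ν_i(0)·(1 - ∏_{a ∈ ∂₊i}(1 - û_{a→i})) + ν_i(1)·(1 - ∏_{a ∈ ∂₋i}(1 - û_{a→i}))`. -/
theorem probability_directly_implied
    {V A : Type} [Fintype V] [Fintype A] [DecidableEq V] [DecidableEq A]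
    (k : ℕ) (hk2 : 2 ≤ k) (Φ : KSAT V A) (hk : ∀ a : A, (Φ.scope a).card = k)
    (htree : Φ.factorGraph.IsTree) (hsat : (Φ.solutions).Nonempty)
    (U : Finset V)
    (h : V → A → ℝ) (u : A → V → ℝ) (hbp : Φ.IsBPFixedPoint k h u)
    (hh : V → A → ℝ) (hu : A → V → ℝ) (hhat : Φ.IsHatSolution U h hh hu)
    (i : V) (hiU : i ∉ U) :
    ((Φ.solutions.filter fun y => ∃ v : Bool, KSAT.Derived Φ U y i v).card : ℝ) /
      (Φ.solutions.card : ℝ) =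
    Φ.bpMarginal u i false * (1 - ∏ a ∈ Φ.nbrPos i, (1 - hu a i)) +
      Φ.bpMarginal u i true * (1 - ∏ a ∈ Φ.nbrNeg i, (1 - hu a i)) := by
  have hsat' : ∃ x, Φ.IsSolution x :=
    hsat.imp fun x hx => (Finset.mem_filter.1 hx).2
  have hcond : condProb (fun x => ∃ v, Φ.Derived U x i v) Φ.IsSolution =
      ((Φ.solutions.filter fun y => ∃ v, Φ.Derived U y i v).card : ℝ) / Φ.solutions.card := by
    rw [KSAT.solutions, Finset.filter_filter, condProb, prob_eq_card_filter, prob_eq_card_filter,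
      div_div_div_cancel_right₀ (by positivity)]
    simp only [and_comm]
  rw [← hcond, condProb_eq_sum (fun x => x i), Fintype.sum_bool, add_comm]
  simp only [KSAT.condProb_apply_eq_and_exists_derived hk2 hk htree hsat' hbp hhat hiU]
  rfl
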